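/- (Lemma A.3: variance-aware empirical concentration of the KME.) Let 𝒳 be a measurable additive group, H a real separable Hilbert space, and φ : 𝒳 → H a bounded measurable feature map; let g(x,y) := ⟨φ(x), φ(y)⟩ be translation invariant with range g̃ := sup g − inf g. Let ν be a probability measure on 𝒳 with kernel mean embedding μ_ν := E_{X∼ν}[φ(X)]. Let X_1,…,X_n be i.i.d. with law ν, n ≥ 2, and define μ̂ := (1/n)Σ_{t=1}^n φ(X_t) and 𝒱̂ := (1/(n−1)) Σ_{t=1}^n ( g(X_t,X_t) − (1/n)Σ_{s=1}^n g(X_t,X_s) ). Then for every δ' ∈ (0,1], with probability at least 1 − δ', ‖μ̂ − μ_ν‖ ≤ √(2·𝒱̂·log(4/δ')/n) + (16/3)·√g̃·log(4/δ')/n. -/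

import Mathlib

open MeasureTheory ProbabilityTheory Finset

noncomputable section

/-- The kernel `g(x,y) = ⟪φ x, φ y⟫` associated with the feature map `φ`. -/
def kerG {𝒳 H : Type*} [NormedAddCommGroup H] [InnerProductSpace ℝ H]
    (φ : 𝒳 → H) (x y : 𝒳) : ℝ :=
  inner ℝ (φ x) (φ y)

/-- The range `g̃ = sup_{x,y} g(x,y) − inf_{x,y} g(x,y)` of the kernel. -/
def kerRange {𝒳 H : Type*} [NormedAddCommGroup H] [InnerProductSpace ℝ H]
    (φ : 𝒳 → H) : ℝ :=
  (⨆ p : 𝒳 × 𝒳, kerG φ p.1 p.2) - (⨅ p : 𝒳 × 𝒳, kerG φ p.1 p.2)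

/-- The kernel mean embedding `μ_ν = E_{X∼ν}[φ(X)]` (a Bochner integral). -/
def KME {𝒳 H : Type*} [MeasurableSpace 𝒳] [NormedAddCommGroup H] [InnerProductSpace ℝ H]
    (φ : 𝒳 → H) (ν : Measure 𝒳) : H :=
  ∫ x, φ x ∂ν

/-- The empirical kernel mean embedding `μ̂ = (1/n) Σ_{t<n} φ(x_t)`. -/
def empKME {𝒳 H : Type*} [NormedAddCommGroup H] [InnerProductSpace ℝ H]
    (φ : 𝒳 → H) (n : ℕ) (x : ℕ → 𝒳) : H :=
  (n : ℝ)⁻¹ • ∑ t ∈ range n, φ (x t)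

/-- The empirical RKHS variance
`𝒱̂ = (1/(n−1)) Σ_{t<n} (g(x_t,x_t) − (1/n) Σ_{s<n} g(x_t,x_s))`. -/
def empVar {𝒳 H : Type*} [NormedAddCommGroup H] [InnerProductSpace ℝ H]
    (φ : 𝒳 → H) (n : ℕ) (x : ℕ → 𝒳) : ℝ :=
  ((n : ℝ) - 1)⁻¹ * ∑ t ∈ range n,
    (kerG φ (x t) (x t) - (n : ℝ)⁻¹ * ∑ s ∈ range n, kerG φ (x t) (x s))

/-!
For a sum `S` of independent centred vectors and an independent centred increment `Y`, the
first-order part of `cosh ‖S + Y‖` is linear in `Y`, so it vanishes in expectation, and the rest is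
at most `cosh ‖S‖ * (exp ‖Y‖ - ‖Y‖)`. Iterating gives a dimension-free Bernstein inequality for
`‖μ̂ - μ_ν‖` in terms of the true variance `V = E ‖φ(X) - μ_ν‖ ^ 2`. The variables
`‖φ(X_t) - μ_ν‖ ^ 2` are nonnegative, so their mean has a one-sided sub-Gaussian lower tail, and
since `𝒱̂ ≥ (1/n) ∑ ‖φ(X_t) - μ_ν‖ ^ 2 - ‖μ̂ - μ_ν‖ ^ 2` the variance `V` can be replaced by `𝒱̂` at
the cost of a term of order `1 / n`. All pairs satisfy `‖φ x - φ y‖ ^ 2 ≤ 2 g̃`, which bounds both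
`‖φ x - μ_ν‖ ^ 2 ≤ 2 g̃` and `V ≤ g̃`.
-/

section ExponentialBounds

theorem hasSum_cosh_sqrt {x : ℝ} (hx : 0 ≤ x) :
    HasSum (fun k : ℕ => x ^ k / ((2 * k).factorial : ℝ)) (Real.cosh √x) := by
  simpa only [pow_mul, Real.sq_sqrt hx] using Real.hasSum_cosh √x

theorem convexOn_cosh_sqrt : ConvexOn ℝ (Set.Ici 0) fun x : ℝ => Real.cosh √x := by
  refine ⟨convex_Ici 0, fun x hx y hy a b ha hb hab => ?_⟩
  have hcomb : 0 ≤ a • x + b • y := convex_Ici (0 : ℝ) hx hy ha hb hab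
  refine hasSum_le (fun k => ?_) (hasSum_cosh_sqrt hcomb)
    (((hasSum_cosh_sqrt hx).const_smul a).add ((hasSum_cosh_sqrt hy).const_smul b))
  have hpow := (convexOn_pow (𝕜 := ℝ) k).2 hx hy ha hb hab
  simp only [smul_eq_mul, mul_div_assoc', ← add_div] at hpow ⊢
  gcongr

theorem exp_sub_one_sub_le {y : ℝ} (hy : 0 ≤ y) (hy3 : y < 3) :
    Real.exp y - 1 - y ≤ y ^ 2 / (2 * (1 - y / 3)) := by
  have hexp : HasSum (fun k : ℕ => y ^ (k + 2) / ((k + 2).factorial : ℝ))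
      (Real.exp y - 1 - y) := by
    have hseries := (hasSum_nat_add_iff' 2).2 (NormedSpace.expSeries_div_hasSum_exp y)
    simpa only [← Real.exp_eq_exp_ℝ, Finset.sum_range_succ, Finset.sum_range_zero, pow_zero,
      pow_one, Nat.factorial_zero, Nat.factorial_one, Nat.cast_one, div_one, zero_add,
      ← sub_sub] using hseries
  have hgeom : HasSum (fun k : ℕ => y ^ 2 / 2 * (y / 3) ^ k) (y ^ 2 / (2 * (1 - y / 3))) := by
    rw [← div_div, div_eq_mul_inv (y ^ 2 / 2)]
    exact (hasSum_geometric_of_lt_one (by positivity) (by linarith)).mul_left _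
  refine hasSum_le (fun k => ?_) hexp hgeom
  have hfactorial : (2 * 3 ^ k : ℝ) ≤ ((k + 2).factorial : ℝ) := by
    exact_mod_cast add_comm 2 k ▸ Nat.factorial_mul_pow_le_factorial (m := 2) (n := k)
  rw [div_pow, div_mul_div_comm, ← pow_add, add_comm 2 k]
  gcongr

theorem exp_neg_le_one_sub_add_sq_div_two {x : ℝ} (hx : 0 ≤ x) :
    Real.exp (-x) ≤ 1 - x + x ^ 2 / 2 := by
  have hpos : 0 < 1 - x + x ^ 2 / 2 := by nlinarith [sq_nonneg (x - 1)]
  rw [Real.exp_neg, inv_le_comm₀ (Real.exp_pos x) hpos]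
  refine le_trans ?_ (Real.quadratic_le_exp_of_nonneg hx)
  rw [inv_le_iff_one_le_mul₀ hpos]
  nlinarith [sq_nonneg (x ^ 2)]

/-- The witness is `l = w / (v + B / 3 * w)` with `w = √(2 * v * L)`, for which
`1 - l * B / 3 = v / (v + B / 3 * w)`. -/
theorem exists_bernstein_exponent {v B L : ℝ} (hv : 0 < v) (hB : 0 ≤ B) (hL : 0 ≤ L) :
    ∃ l, 0 ≤ l ∧ l * B < 3 ∧
      l ^ 2 * v / (2 * (1 - l * B / 3)) - l * (√(2 * v * L) + B / 3 * L) = -L := by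
  set w := √(2 * v * L)
  have hw : 0 ≤ w := Real.sqrt_nonneg _
  have hwL : L = w ^ 2 / (2 * v) := by
    rw [Real.sq_sqrt (by positivity)]
    field_simp
  have hcompl : 1 - w / (v + B / 3 * w) * B / 3 = v / (v + B / 3 * w) := by
    field_simp
    ring
  refine ⟨w / (v + B / 3 * w), by positivity, ?_, ?_⟩
  · have hpos : 0 < v / (v + B / 3 * w) := by positivity
    linarith
  · rw [hcompl, hwL]
    field_simp
    ring

end ExponentialBounds

section CoshNorm

variable {H : Type*} [NormedAddCommGroup H] [InnerProductSpace ℝ H]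

/-- The gradient of `x ↦ cosh ‖x‖`. At `x = 0` the convention `a / 0 = 0` gives the correct
value `0`. -/
def coshNormGrad (x : H) : H :=
  (Real.sinh ‖x‖ / ‖x‖) • x

theorem norm_coshNormGrad (x : H) : ‖coshNormGrad x‖ = Real.sinh ‖x‖ := by
  rcases eq_or_ne x 0 with rfl | hx
  · simp [coshNormGrad]
  · rw [coshNormGrad, norm_smul, norm_div, norm_norm, div_mul_cancel₀ _ (norm_ne_zero_iff.2 hx),
      Real.norm_of_nonneg (Real.sinh_nonneg_iff.2 (norm_nonneg x))]

theorem inner_coshNormGrad (x y : H) :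
    inner ℝ (coshNormGrad x) y
      = Real.cos (InnerProductGeometry.angle x y) * (Real.sinh ‖x‖ * ‖y‖) := by
  rw [coshNormGrad, real_inner_smul_left, ← InnerProductGeometry.cos_angle_mul_norm_mul_norm]
  rcases eq_or_ne x 0 with rfl | hx
  · simp
  · field_simp [norm_ne_zero_iff.2 hx]

theorem measurable_coshNormGrad [MeasurableSpace H] [BorelSpace H] [SecondCountableTopology H] :
    Measurable (coshNormGrad : H → H) := by
  unfold coshNormGrad
  fun_prop

/-- The right-hand side is the hyperbolic law of cosines. Convexity of `cosh ∘ √` applies because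
`‖x + y‖ ^ 2` is the convex combination of `(‖x‖ + ‖y‖) ^ 2` and `(‖x‖ - ‖y‖) ^ 2` with weights
`(1 ± cos (angle x y)) / 2`. -/
theorem cosh_norm_add_le_cosh_mul_cosh_add (x y : H) :
    Real.cosh ‖x + y‖ ≤ Real.cosh ‖x‖ * Real.cosh ‖y‖
      + Real.cos (InnerProductGeometry.angle x y) * (Real.sinh ‖x‖ * Real.sinh ‖y‖) := by
  set c := Real.cos (InnerProductGeometry.angle x y)
  have hweight_add : 0 ≤ (1 + c) / 2 := by
    linarith [Real.neg_one_le_cos (InnerProductGeometry.angle x y)]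
  have hweight_sub : 0 ≤ (1 - c) / 2 := by
    linarith [Real.cos_le_one (InnerProductGeometry.angle x y)]
  have hnorm : ‖x + y‖ ^ 2
      = (1 + c) / 2 * (‖x‖ + ‖y‖) ^ 2 + (1 - c) / 2 * (‖x‖ - ‖y‖) ^ 2 := by
    rw [norm_add_sq_real, ← InnerProductGeometry.cos_angle_mul_norm_mul_norm]
    ring
  have hconvex := convexOn_cosh_sqrt.2 (Set.mem_Ici.2 (sq_nonneg (‖x‖ + ‖y‖)))
    (Set.mem_Ici.2 (sq_nonneg (‖x‖ - ‖y‖))) hweight_add hweight_sub (by ring)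
  simp only [smul_eq_mul, ← hnorm, Real.sqrt_sq_eq_abs, Real.cosh_abs, Real.cosh_add,
    Real.cosh_sub] at hconvex
  linarith

theorem cosh_norm_add_le_inner_add (x y : H) :
    Real.cosh ‖x + y‖
      ≤ inner ℝ (coshNormGrad x) y + Real.cosh ‖x‖ * (Real.exp ‖y‖ - ‖y‖) := by
  set c := Real.cos (InnerProductGeometry.angle x y)
  have hsinh : 0 ≤ Real.sinh ‖y‖ - ‖y‖ :=
    sub_nonneg.2 (Real.self_le_sinh_iff.2 (norm_nonneg y))
  have hcosh : 0 ≤ Real.cosh ‖x‖ - c * Real.sinh ‖x‖ := by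
    have hmul : c * Real.sinh ‖x‖ ≤ Real.sinh ‖x‖ :=
      mul_le_of_le_one_left (Real.sinh_nonneg_iff.2 (norm_nonneg x)) (Real.cos_le_one _)
    linarith [Real.sinh_lt_cosh ‖x‖]
  rw [inner_coshNormGrad, ← Real.cosh_add_sinh ‖y‖]
  linarith [cosh_norm_add_le_cosh_mul_cosh_add x y, mul_nonneg hcosh hsinh]

end CoshNorm

section ExpNorm

variable {E Ω : Type*} [NormedAddCommGroup E] [MeasurableSpace Ω] {P : Measure Ω} {Y : Ω → E}

theorem integrable_of_integrable_exp_norm (hY : AEStronglyMeasurable Y P)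
    (hexp : Integrable (fun ω => Real.exp ‖Y ω‖) P) : Integrable Y P :=
  hexp.mono' hY (ae_of_all _ fun ω => by linarith [Real.add_one_le_exp ‖Y ω‖])

theorem integrable_exp_norm_of_bound [IsFiniteMeasure P] {B : ℝ}
    (hY : AEStronglyMeasurable Y P) (hB : ∀ᵐ ω ∂P, ‖Y ω‖ ≤ B) :
    Integrable (fun ω => Real.exp ‖Y ω‖) P := by
  refine Integrable.of_bound (Real.continuous_exp.comp_aestronglyMeasurable hY.norm)
    (Real.exp B) ?_
  filter_upwards [hB] with ω hω
  rwa [Real.norm_of_nonneg (Real.exp_pos _).le, Real.exp_le_exp]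

theorem integral_exp_norm_sub_norm_le [IsProbabilityMeasure P] {B : ℝ}
    (hY : AEStronglyMeasurable Y P) (hB : ∀ᵐ ω ∂P, ‖Y ω‖ ≤ B) (hB3 : B < 3) :
    ∫ ω, (Real.exp ‖Y ω‖ - ‖Y ω‖) ∂P
      ≤ Real.exp ((∫ ω, ‖Y ω‖ ^ 2 ∂P) / (2 * (1 - B / 3))) := by
  have hsq : Integrable (fun ω => ‖Y ω‖ ^ 2) P := (MemLp.of_bound hY B hB).norm.integrable_sq
  have hexp : Integrable (fun ω => Real.exp ‖Y ω‖) P := integrable_exp_norm_of_bound hY hB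
  calc ∫ ω, (Real.exp ‖Y ω‖ - ‖Y ω‖) ∂P
      ≤ ∫ ω, (‖Y ω‖ ^ 2 / (2 * (1 - B / 3)) + 1) ∂P := by
        refine integral_mono_ae (hexp.sub (integrable_of_integrable_exp_norm hY hexp).norm)
          ((hsq.div_const _).add (integrable_const _)) ?_
        filter_upwards [hB] with ω hω
        have hquad : ‖Y ω‖ ^ 2 / (2 * (1 - ‖Y ω‖ / 3)) ≤ ‖Y ω‖ ^ 2 / (2 * (1 - B / 3)) := by
          have : 0 < 1 - B / 3 := by linarith
          gcongr
        linarith [exp_sub_one_sub_le (norm_nonneg (Y ω)) (hω.trans_lt hB3)]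
    _ = (∫ ω, ‖Y ω‖ ^ 2 ∂P) / (2 * (1 - B / 3)) + 1 := by
        rw [integral_add (hsq.div_const _) (integrable_const _), integral_div]
        simp
    _ ≤ Real.exp ((∫ ω, ‖Y ω‖ ^ 2 ∂P) / (2 * (1 - B / 3))) := Real.add_one_le_exp _

theorem measureReal_le_norm_le_two_mul_exp_neg_mul [IsFiniteMeasure P]
    (hcosh : Integrable (fun ω => Real.cosh ‖Y ω‖) P) (r : ℝ) :
    P.real {ω | r ≤ ‖Y ω‖} ≤ 2 * Real.exp (-r) * ∫ ω, Real.cosh ‖Y ω‖ ∂P := by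
  have hsubset : {ω | r ≤ ‖Y ω‖} ⊆ {ω | Real.exp r / 2 ≤ Real.cosh ‖Y ω‖} := fun ω hω => by
    have hexp : Real.exp r ≤ Real.exp ‖Y ω‖ := Real.exp_le_exp.2 hω
    rw [Set.mem_ofPred_eq, Real.cosh_eq]
    linarith [Real.exp_pos (-‖Y ω‖)]
  have hmarkov := mul_meas_ge_le_integral_of_nonneg (μ := P)
    (ae_of_all _ fun ω => (Real.cosh_pos ‖Y ω‖).le) hcosh (Real.exp r / 2)
  calc P.real {ω | r ≤ ‖Y ω‖}
      ≤ P.real {ω | Real.exp r / 2 ≤ Real.cosh ‖Y ω‖} := measureReal_mono hsubset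
    _ = 2 * Real.exp (-r)
          * (Real.exp r / 2 * P.real {ω | Real.exp r / 2 ≤ Real.cosh ‖Y ω‖}) := by
        rw [Real.exp_neg]
        field_simp
    _ ≤ 2 * Real.exp (-r) * ∫ ω, Real.cosh ‖Y ω‖ ∂P := by gcongr

theorem integrable_cosh_norm_mul_exp_norm_sub [MeasurableSpace E] [BorelSpace E]
    [SecondCountableTopology E] {S : Ω → E} (hSY : IndepFun S Y P) (hY : AEMeasurable Y P)
    (hcosh : Integrable (fun ω => Real.cosh ‖S ω‖) P)
    (hexp : Integrable (fun ω => Real.exp ‖Y ω‖) P) :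
    Integrable (fun ω => Real.cosh ‖S ω‖ * (Real.exp ‖Y ω‖ - ‖Y ω‖)) P :=
  (hSY.comp (φ := fun x => Real.cosh ‖x‖) (ψ := fun y => Real.exp ‖y‖ - ‖y‖)
    (by fun_prop) (by fun_prop)).integrable_mul hcosh
    (hexp.sub (integrable_of_integrable_exp_norm hY.aestronglyMeasurable hexp).norm)

end ExpNorm

theorem indepFun_fun_sum_of_notMem {ι Ω M : Type*} [MeasurableSpace Ω] {P : Measure Ω}
    [AddCommMonoid M] [MeasurableSpace M] [MeasurableAdd₂ M] {Y : ι → Ω → M} {s : Finset ι}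
    {i : ι} (hindep : iIndepFun Y P) (hY : ∀ i, AEMeasurable (Y i) P) (hi : i ∉ s) :
    IndepFun (fun ω => ∑ j ∈ s, Y j ω) (Y i) P := by
  simpa only [← Finset.sum_fn] using hindep.indepFun_finsetSum_of_notMem₀ hY hi

section HilbertBernstein

variable {H Ω ι : Type*} [NormedAddCommGroup H] [InnerProductSpace ℝ H] [MeasurableSpace Ω]
  {P : Measure Ω}
  [MeasurableSpace H] [BorelSpace H] [SecondCountableTopology H]

section Add

variable {S Y : Ω → H}

theorem integrable_coshNormGrad (hS : AEMeasurable S P)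
    (hcosh : Integrable (fun ω => Real.cosh ‖S ω‖) P) :
    Integrable (fun ω => coshNormGrad (S ω)) P :=
  hcosh.mono' (measurable_coshNormGrad.comp_aemeasurable hS).aestronglyMeasurable
    (ae_of_all _ fun ω => (norm_coshNormGrad (S ω)).trans_le (Real.sinh_lt_cosh _).le)

theorem integrable_inner_coshNormGrad (hSY : IndepFun S Y P) (hS : AEMeasurable S P)
    (hcosh : Integrable (fun ω => Real.cosh ‖S ω‖) P) (hY : Integrable Y P) :
    Integrable (fun ω => inner ℝ (coshNormGrad (S ω)) (Y ω)) P :=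
  (hSY.comp measurable_coshNormGrad measurable_id).integrable_bilin
    (integrable_coshNormGrad hS hcosh) hY (innerSL ℝ)

theorem integrable_cosh_norm_add (hSY : IndepFun S Y P) (hS : AEMeasurable S P)
    (hY : AEMeasurable Y P) (hcosh : Integrable (fun ω => Real.cosh ‖S ω‖) P)
    (hexp : Integrable (fun ω => Real.exp ‖Y ω‖) P) :
    Integrable (fun ω => Real.cosh ‖S ω + Y ω‖) P := by
  have hYint := integrable_of_integrable_exp_norm hY.aestronglyMeasurable hexp
  refine ((integrable_inner_coshNormGrad hSY hS hcosh hYint).add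
    (integrable_cosh_norm_mul_exp_norm_sub hSY hY hcosh hexp)).mono'
    (by fun_prop) (ae_of_all _ fun ω => ?_)
  rw [Real.norm_of_nonneg (Real.cosh_pos _).le]
  exact cosh_norm_add_le_inner_add (S ω) (Y ω)

theorem integral_cosh_norm_add_le [CompleteSpace H] (hSY : IndepFun S Y P)
    (hS : AEMeasurable S P) (hY : AEMeasurable Y P)
    (hcosh : Integrable (fun ω => Real.cosh ‖S ω‖) P)
    (hexp : Integrable (fun ω => Real.exp ‖Y ω‖) P) (hmean : ∫ ω, Y ω ∂P = 0) :
    ∫ ω, Real.cosh ‖S ω + Y ω‖ ∂P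
      ≤ (∫ ω, Real.cosh ‖S ω‖ ∂P) * ∫ ω, (Real.exp ‖Y ω‖ - ‖Y ω‖) ∂P := by
  have hYint := integrable_of_integrable_exp_norm hY.aestronglyMeasurable hexp
  have hlin := integrable_inner_coshNormGrad hSY hS hcosh hYint
  have hquad := integrable_cosh_norm_mul_exp_norm_sub hSY hY hcosh hexp
  have hlin_zero : ∫ ω, inner ℝ (coshNormGrad (S ω)) (Y ω) ∂P = 0 := by
    have hbilin : ∫ ω, inner ℝ (coshNormGrad (S ω)) (Y ω) ∂P
        = inner ℝ (∫ ω, coshNormGrad (S ω) ∂P) (∫ ω, Y ω ∂P) :=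
      (hSY.comp measurable_coshNormGrad measurable_id).integral_bilin
        (integrable_coshNormGrad hS hcosh) hYint (innerSL ℝ)
    rw [hbilin, hmean, inner_zero_right]
  have hquad_eq : ∫ ω, Real.cosh ‖S ω‖ * (Real.exp ‖Y ω‖ - ‖Y ω‖) ∂P
      = (∫ ω, Real.cosh ‖S ω‖ ∂P) * ∫ ω, (Real.exp ‖Y ω‖ - ‖Y ω‖) ∂P :=
    (hSY.comp (φ := fun x => Real.cosh ‖x‖) (ψ := fun y => Real.exp ‖y‖ - ‖y‖)
      (by fun_prop) (by fun_prop)).integral_fun_mul_eq_mul_integral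
      hcosh.aestronglyMeasurable (by fun_prop)
  calc ∫ ω, Real.cosh ‖S ω + Y ω‖ ∂P
      ≤ ∫ ω, (inner ℝ (coshNormGrad (S ω)) (Y ω)
          + Real.cosh ‖S ω‖ * (Real.exp ‖Y ω‖ - ‖Y ω‖)) ∂P :=
        integral_mono (integrable_cosh_norm_add hSY hS hY hcosh hexp) (hlin.add hquad)
          fun ω => cosh_norm_add_le_inner_add (S ω) (Y ω)
    _ = (∫ ω, Real.cosh ‖S ω‖ ∂P) * ∫ ω, (Real.exp ‖Y ω‖ - ‖Y ω‖) ∂P := by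
        rw [integral_add hlin hquad, hlin_zero, hquad_eq, zero_add]

end Add

variable {Y : ι → Ω → H} {s : Finset ι}

theorem integrable_cosh_norm_sum (hindep : iIndepFun Y P) (hY : ∀ i, AEMeasurable (Y i) P)
    (hexp : ∀ i ∈ s, Integrable (fun ω => Real.exp ‖Y i ω‖) P) :
    Integrable (fun ω => Real.cosh ‖∑ i ∈ s, Y i ω‖) P := by
  classical
  have := hindep.isProbabilityMeasure
  induction s using Finset.induction_on with
  | empty => simp
  | insert i s hi ih =>
    simp only [Finset.sum_insert hi, add_comm (Y i _)]
    rw [Finset.forall_mem_insert] at hexp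
    exact integrable_cosh_norm_add (indepFun_fun_sum_of_notMem hindep hY hi)
      (Finset.aemeasurable_fun_sum s fun j _ => hY j) (hY i) (ih hexp.2) hexp.1

variable [CompleteSpace H]

theorem integral_cosh_norm_sum_le (hindep : iIndepFun Y P) (hY : ∀ i, AEMeasurable (Y i) P)
    (hexp : ∀ i ∈ s, Integrable (fun ω => Real.exp ‖Y i ω‖) P)
    (hmean : ∀ i ∈ s, ∫ ω, Y i ω ∂P = 0) :
    ∫ ω, Real.cosh ‖∑ i ∈ s, Y i ω‖ ∂P
      ≤ ∏ i ∈ s, ∫ ω, (Real.exp ‖Y i ω‖ - ‖Y i ω‖) ∂P := by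
  classical
  have := hindep.isProbabilityMeasure
  induction s using Finset.induction_on with
  | empty => simp
  | insert i s hi ih =>
    simp only [Finset.sum_insert hi, add_comm (Y i _)]
    rw [Finset.forall_mem_insert] at hexp hmean
    rw [Finset.prod_insert hi, mul_comm]
    refine (integral_cosh_norm_add_le (indepFun_fun_sum_of_notMem hindep hY hi)
      (Finset.aemeasurable_fun_sum s fun j _ => hY j) (hY i)
      (integrable_cosh_norm_sum hindep hY hexp.2) hexp.1 hmean.1).trans ?_
    refine mul_le_mul_of_nonneg_right (ih hexp.2 hmean.2) (integral_nonneg fun ω => ?_)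
    exact sub_nonneg.2 (by linarith [Real.add_one_le_exp ‖Y i ω‖])

theorem integral_cosh_norm_sum_le_exp {B v : ℝ} (hindep : iIndepFun Y P)
    (hY : ∀ i, AEMeasurable (Y i) P) (hB : ∀ i ∈ s, ∀ᵐ ω ∂P, ‖Y i ω‖ ≤ B) (hB3 : B < 3)
    (hmean : ∀ i ∈ s, ∫ ω, Y i ω ∂P = 0) (hv : ∑ i ∈ s, ∫ ω, ‖Y i ω‖ ^ 2 ∂P ≤ v) :
    ∫ ω, Real.cosh ‖∑ i ∈ s, Y i ω‖ ∂P ≤ Real.exp (v / (2 * (1 - B / 3))) := by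
  have := hindep.isProbabilityMeasure
  have hexp : ∀ i ∈ s, Integrable (fun ω => Real.exp ‖Y i ω‖) P := fun i hi =>
    integrable_exp_norm_of_bound (hY i).aestronglyMeasurable (hB i hi)
  calc ∫ ω, Real.cosh ‖∑ i ∈ s, Y i ω‖ ∂P
      ≤ ∏ i ∈ s, ∫ ω, (Real.exp ‖Y i ω‖ - ‖Y i ω‖) ∂P :=
        integral_cosh_norm_sum_le hindep hY hexp hmean
    _ ≤ ∏ i ∈ s, Real.exp ((∫ ω, ‖Y i ω‖ ^ 2 ∂P) / (2 * (1 - B / 3))) := by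
        refine Finset.prod_le_prod (fun i _ => integral_nonneg fun ω => ?_) fun i hi =>
          integral_exp_norm_sub_norm_le (hY i).aestronglyMeasurable (hB i hi) hB3
        exact sub_nonneg.2 (by linarith [Real.add_one_le_exp ‖Y i ω‖])
    _ = Real.exp ((∑ i ∈ s, ∫ ω, ‖Y i ω‖ ^ 2 ∂P) / (2 * (1 - B / 3))) := by
        rw [← Real.exp_sum, Finset.sum_div]
    _ ≤ Real.exp (v / (2 * (1 - B / 3))) := by
        have : 0 < 1 - B / 3 := by linarith
        gcongr

theorem measureReal_bernstein_le_norm_sum {B v L : ℝ} (hindep : iIndepFun Y P)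
    (hY : ∀ i, AEMeasurable (Y i) P) (hB : ∀ i ∈ s, ∀ᵐ ω ∂P, ‖Y i ω‖ ≤ B) (hB0 : 0 ≤ B)
    (hmean : ∀ i ∈ s, ∫ ω, Y i ω ∂P = 0) (hv : ∑ i ∈ s, ∫ ω, ‖Y i ω‖ ^ 2 ∂P ≤ v)
    (hv0 : 0 < v) (hL : 0 ≤ L) :
    P.real {ω | √(2 * v * L) + B / 3 * L ≤ ‖∑ i ∈ s, Y i ω‖} ≤ 2 * Real.exp (-L) := by
  have := hindep.isProbabilityMeasure
  obtain ⟨l, hl, hlB, hexponent⟩ := exists_bernstein_exponent hv0 hB0 hL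
  set r := √(2 * v * L) + B / 3 * L
  have hnorm (i : ι) (ω : Ω) : ‖l • Y i ω‖ = l * ‖Y i ω‖ := norm_smul_of_nonneg hl _
  have hindep' : iIndepFun (fun i ω => l • Y i ω) P :=
    hindep.comp (fun _ y => l • y) fun _ => measurable_const_smul l
  have hY' : ∀ i, AEMeasurable (fun ω => l • Y i ω) P := fun i => (hY i).const_smul l
  have hB' : ∀ i ∈ s, ∀ᵐ ω ∂P, ‖l • Y i ω‖ ≤ l * B := fun i hi => by
    filter_upwards [hB i hi] with ω hω
    rw [hnorm]
    gcongr
  have hmean' : ∀ i ∈ s, ∫ ω, l • Y i ω ∂P = 0 := fun i hi => by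
    rw [integral_smul, hmean i hi, smul_zero]
  have hv' : ∑ i ∈ s, ∫ ω, ‖l • Y i ω‖ ^ 2 ∂P ≤ l ^ 2 * v := by
    simp only [hnorm, mul_pow, integral_const_mul, ← Finset.mul_sum]
    gcongr
  have hmgf := integral_cosh_norm_sum_le_exp hindep' hY' hB' hlB hmean' hv'
  have hcosh := integrable_cosh_norm_sum hindep' hY' fun i hi =>
    integrable_exp_norm_of_bound (hY' i).aestronglyMeasurable (hB' i hi)
  calc P.real {ω | r ≤ ‖∑ i ∈ s, Y i ω‖}
      ≤ P.real {ω | l * r ≤ ‖∑ i ∈ s, l • Y i ω‖} := measureReal_mono fun ω hω => by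
        rw [Set.mem_ofPred_eq, ← Finset.smul_sum, norm_smul_of_nonneg hl]
        exact mul_le_mul_of_nonneg_left hω hl
    _ ≤ 2 * Real.exp (-(l * r)) * ∫ ω, Real.cosh ‖∑ i ∈ s, l • Y i ω‖ ∂P :=
        measureReal_le_norm_le_two_mul_exp_neg_mul hcosh (l * r)
    _ ≤ 2 * Real.exp (-(l * r)) * Real.exp (l ^ 2 * v / (2 * (1 - l * B / 3))) := by gcongr
    _ = 2 * Real.exp (-L) := by
        rw [mul_assoc, ← Real.exp_add, neg_add_eq_sub, hexponent]

end HilbertBernstein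

section LowerTail

variable {Ω ι : Type*} [MeasurableSpace Ω] {P : Measure Ω}

theorem integrable_exp_neg_mul_of_nonneg [IsFiniteMeasure P] {Z : Ω → ℝ}
    (hZ : AEMeasurable Z P) (hZ0 : 0 ≤ᵐ[P] Z) {a : ℝ} (ha : 0 ≤ a) :
    Integrable (fun ω => Real.exp (-a * Z ω)) P := by
  refine Integrable.of_bound (by fun_prop) 1 ?_
  filter_upwards [hZ0] with ω hω
  rw [Real.norm_of_nonneg (Real.exp_pos _).le, Real.exp_le_one_iff, neg_mul, neg_nonpos]
  exact mul_nonneg ha hω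

theorem mgf_neg_le_exp_of_nonneg [IsProbabilityMeasure P] {Z : Ω → ℝ} (hZ : MemLp Z 2 P)
    (hZ0 : 0 ≤ᵐ[P] Z) {a : ℝ} (ha : 0 ≤ a) :
    mgf Z P (-a) ≤ Real.exp (-a * ∫ ω, Z ω ∂P + a ^ 2 / 2 * ∫ ω, Z ω ^ 2 ∂P) := by
  have hint : Integrable Z P := hZ.integrable one_le_two
  have hlin : Integrable (fun ω => 1 - a * Z ω) P := (integrable_const 1).sub (hint.const_mul a)
  have hquad : Integrable (fun ω => a ^ 2 / 2 * Z ω ^ 2) P := hZ.integrable_sq.const_mul _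
  calc mgf Z P (-a)
      ≤ ∫ ω, (1 - a * Z ω + a ^ 2 / 2 * Z ω ^ 2) ∂P := by
        refine integral_mono_ae
          (integrable_exp_neg_mul_of_nonneg hZ.aestronglyMeasurable.aemeasurable hZ0 ha)
          (hlin.add hquad) ?_
        filter_upwards [hZ0] with ω hω
        have := exp_neg_le_one_sub_add_sq_div_two (mul_nonneg ha hω)
        rw [neg_mul]
        linarith
    _ = -a * ∫ ω, Z ω ∂P + a ^ 2 / 2 * ∫ ω, Z ω ^ 2 ∂P + 1 := by
        rw [integral_add hlin hquad, integral_sub (integrable_const 1) (hint.const_mul a),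
          integral_const_mul, integral_const_mul, integral_const, probReal_univ, one_smul]
        ring
    _ ≤ Real.exp (-a * ∫ ω, Z ω ∂P + a ^ 2 / 2 * ∫ ω, Z ω ^ 2 ∂P) := Real.add_one_le_exp _

theorem mgf_sum_neg_le_exp_of_nonneg {Z : ι → Ω → ℝ} {s : Finset ι} (hindep : iIndepFun Z P)
    (hZ : ∀ i, MemLp (Z i) 2 P) (hZ0 : ∀ i ∈ s, 0 ≤ᵐ[P] Z i) {a : ℝ} (ha : 0 ≤ a) :
    mgf (∑ i ∈ s, Z i) P (-a)
      ≤ Real.exp (-a * ∑ i ∈ s, ∫ ω, Z i ω ∂P + a ^ 2 / 2 * ∑ i ∈ s, ∫ ω, Z i ω ^ 2 ∂P) := by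
  have := hindep.isProbabilityMeasure
  rw [hindep.mgf_sum₀ fun i => (hZ i).aestronglyMeasurable.aemeasurable, Finset.mul_sum,
    Finset.mul_sum, ← Finset.sum_add_distrib, Real.exp_sum]
  exact Finset.prod_le_prod (fun i _ => mgf_nonneg) fun i hi =>
    mgf_neg_le_exp_of_nonneg (hZ i) (hZ0 i hi) ha

theorem measureReal_sum_le_sub_sqrt_of_nonneg {Z : ι → Ω → ℝ} {s : Finset ι} {v L : ℝ}
    (hindep : iIndepFun Z P) (hZ : ∀ i, MemLp (Z i) 2 P) (hZ0 : ∀ i ∈ s, 0 ≤ᵐ[P] Z i)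
    (hv : ∑ i ∈ s, ∫ ω, Z i ω ^ 2 ∂P ≤ v) (hv0 : 0 < v) (hL : 0 ≤ L) :
    P.real {ω | ∑ i ∈ s, Z i ω ≤ ∑ i ∈ s, ∫ ω, Z i ω ∂P - √(2 * v * L)} ≤ Real.exp (-L) := by
  have := hindep.isProbabilityMeasure
  set m := ∑ i ∈ s, ∫ ω, Z i ω ∂P
  set w := √(2 * v * L)
  have hwL : L = w ^ 2 / (2 * v) := by
    rw [Real.sq_sqrt (by positivity)]
    field_simp
  have ha : 0 ≤ w / v := by positivity
  have hZm : ∀ i ∈ s, AEMeasurable (Z i) P := fun i _ =>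
    (hZ i).aestronglyMeasurable.aemeasurable
  have hsum0 : 0 ≤ᵐ[P] ∑ i ∈ s, Z i := by
    filter_upwards [(Finset.eventually_all s).2 hZ0] with ω hω
    rw [Finset.sum_apply]
    exact Finset.sum_nonneg hω
  have hchernoff := measure_le_le_exp_mul_mgf (m - w) (neg_nonpos.2 ha)
    (integrable_exp_neg_mul_of_nonneg (Finset.aemeasurable_sum s hZm) hsum0 ha)
  simp only [Finset.sum_apply, neg_neg] at hchernoff
  calc P.real {ω | ∑ i ∈ s, Z i ω ≤ m - w}
      ≤ Real.exp (w / v * (m - w)) * mgf (∑ i ∈ s, Z i) P (-(w / v)) := hchernoff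
    _ ≤ Real.exp (w / v * (m - w)) * Real.exp (-(w / v) * m + (w / v) ^ 2 / 2 * v) := by
        grw [mgf_sum_neg_le_exp_of_nonneg hindep hZ hZ0 ha, hv]
    _ = Real.exp (-L) := by
        rw [← Real.exp_add, hwL]
        congr 1
        field_simp
        ring

end LowerTail

section Variance

variable {H : Type*} [NormedAddCommGroup H] [InnerProductSpace ℝ H]

theorem sum_norm_sub_sq_eq {ι : Type*} {s : Finset ι} {y : ι → H} {m : H}
    (hm : ∑ i ∈ s, y i = (#s : ℝ) • m) (c : H) :
    ∑ i ∈ s, ‖y i - c‖ ^ 2 = ∑ i ∈ s, ‖y i - m‖ ^ 2 + #s * ‖m - c‖ ^ 2 := by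
  have hcross : ∑ i ∈ s, inner ℝ (y i - m) (m - c) = 0 := by
    rw [← sum_inner, Finset.sum_sub_distrib, hm, Finset.sum_const, Nat.cast_smul_eq_nsmul,
      sub_self, inner_zero_left]
  have hexpand (i : ι) :
      ‖y i - c‖ ^ 2 = ‖y i - m‖ ^ 2 + 2 * inner ℝ (y i - m) (m - c) + ‖m - c‖ ^ 2 := by
    rw [← norm_add_sq_real, sub_add_sub_cancel]
  simp only [hexpand, Finset.sum_add_distrib, ← Finset.mul_sum, hcross, Finset.sum_const,
    nsmul_eq_mul, mul_zero, add_zero]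

theorem integral_norm_sub_sq_eq [CompleteSpace H] {Ω : Type*} [MeasurableSpace Ω] {P : Measure Ω}
    [IsProbabilityMeasure P] {f : Ω → H} (hf : MemLp f 2 P) (c : H) :
    ∫ ω, ‖f ω - c‖ ^ 2 ∂P
      = ∫ ω, ‖f ω - ∫ ω', f ω' ∂P‖ ^ 2 ∂P + ‖∫ ω, f ω ∂P - c‖ ^ 2 := by
  set m := ∫ ω, f ω ∂P
  have hcentred : MemLp (fun ω => f ω - m) 2 P := hf.sub (memLp_const m)
  have hcentred_int : Integrable (fun ω => f ω - m) P := hcentred.integrable one_le_two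
  have hcross : ∫ ω, inner ℝ (f ω - m) (m - c) ∂P = 0 := by
    simp_rw [real_inner_comm (m - c)]
    rw [integral_inner hcentred_int,
      integral_sub (hf.integrable one_le_two) (integrable_const m), integral_const, probReal_univ,
      one_smul, sub_self, inner_zero_right]
  have hexpand (ω : Ω) :
      ‖f ω - c‖ ^ 2 = ‖f ω - m‖ ^ 2 + 2 * inner ℝ (f ω - m) (m - c) + ‖m - c‖ ^ 2 := by
    rw [← norm_add_sq_real, sub_add_sub_cancel]
  have hsq : Integrable (fun ω => ‖f ω - m‖ ^ 2) P := hcentred.norm.integrable_sq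
  have hinner : Integrable (fun ω => 2 * inner ℝ (f ω - m) (m - c)) P :=
    (hcentred_int.inner_const (m - c)).const_mul 2
  simp_rw [hexpand]
  rw [integral_add (hsq.fun_add hinner) (integrable_const _), integral_add hsq hinner,
    integral_const_mul, hcross, integral_const, probReal_univ, one_smul, mul_zero, add_zero]

theorem norm_sub_integral_sq_add_integral_le [CompleteSpace H] {Ω : Type*} [MeasurableSpace Ω]
    {P : Measure Ω} [IsProbabilityMeasure P] {f : Ω → H} {M : ℝ} (hf : MemLp f 2 P)
    (hM : ∀ ω ω', ‖f ω - f ω'‖ ^ 2 ≤ M) (ω : Ω) :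
    ‖f ω - ∫ ω', f ω' ∂P‖ ^ 2 + ∫ ω', ‖f ω' - ∫ ω'', f ω'' ∂P‖ ^ 2 ∂P ≤ M := by
  rw [add_comm, norm_sub_rev, ← integral_norm_sub_sq_eq hf]
  calc ∫ ω', ‖f ω' - f ω‖ ^ 2 ∂P
      ≤ ∫ _, M ∂P := integral_mono (hf.sub (memLp_const (f ω))).norm.integrable_sq
        (integrable_const M) fun ω' => hM ω' ω
    _ = M := by rw [integral_const, probReal_univ, one_smul]

theorem two_mul_integral_norm_sub_integral_sq_le [CompleteSpace H] {Ω : Type*}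
    [MeasurableSpace Ω] {P : Measure Ω} [IsProbabilityMeasure P] {f : Ω → H} {M : ℝ}
    (hf : MemLp f 2 P) (hM : ∀ ω ω', ‖f ω - f ω'‖ ^ 2 ≤ M) :
    2 * ∫ ω, ‖f ω - ∫ ω', f ω' ∂P‖ ^ 2 ∂P ≤ M := by
  set V := ∫ ω, ‖f ω - ∫ ω', f ω' ∂P‖ ^ 2 ∂P
  have hV : V ≤ ∫ _, (M - V) ∂P :=
    integral_mono (hf.sub (memLp_const _)).norm.integrable_sq (integrable_const _)
      fun ω => le_sub_iff_add_le.2 (norm_sub_integral_sq_add_integral_le hf hM ω)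
  rw [integral_const, probReal_univ, one_smul] at hV
  linarith

end Variance

section Kernel

variable {𝒳 H : Type*} [NormedAddCommGroup H] [InnerProductSpace ℝ H]

theorem norm_sub_sq_le_two_mul_kerRange {φ : 𝒳 → H} (hφ : ∃ C : ℝ, ∀ x, ‖φ x‖ ≤ C) (x y : 𝒳) :
    ‖φ x - φ y‖ ^ 2 ≤ 2 * kerRange φ := by
  obtain ⟨C, hC⟩ := hφ
  have habs (p : 𝒳 × 𝒳) : |kerG φ p.1 p.2| ≤ C * C :=
    (abs_real_inner_le_norm _ _).trans (mul_le_mul (hC _) (hC _) (norm_nonneg _)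
      ((norm_nonneg _).trans (hC p.1)))
  have hle_sup (p : 𝒳 × 𝒳) : kerG φ p.1 p.2 ≤ ⨆ q : 𝒳 × 𝒳, kerG φ q.1 q.2 :=
    le_ciSup (f := fun q : 𝒳 × 𝒳 => kerG φ q.1 q.2)
      ⟨C * C, Set.forall_mem_range.2 fun q => (abs_le.1 (habs q)).2⟩ p
  have hinf_le (p : 𝒳 × 𝒳) : ⨅ q : 𝒳 × 𝒳, kerG φ q.1 q.2 ≤ kerG φ p.1 p.2 :=
    ciInf_le (f := fun q : 𝒳 × 𝒳 => kerG φ q.1 q.2)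
      ⟨-(C * C), Set.forall_mem_range.2 fun q => (abs_le.1 (habs q)).1⟩ p
  have hpolar : ‖φ x - φ y‖ ^ 2 = kerG φ x x - 2 * kerG φ x y + kerG φ y y := by
    rw [norm_sub_sq_real, kerG, kerG, kerG, real_inner_self_eq_norm_sq,
      real_inner_self_eq_norm_sq]
  rw [hpolar, kerRange]
  linarith [hle_sup (x, x), hle_sup (y, y), hinf_le (x, y)]

variable (φ : 𝒳 → H) (n : ℕ) (x : ℕ → 𝒳)

theorem sum_eq_smul_empKME : ∑ t ∈ range n, φ (x t) = (n : ℝ) • empKME φ n x := by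
  rcases eq_or_ne n 0 with rfl | hn
  · simp
  · rw [empKME, smul_inv_smul₀ (Nat.cast_ne_zero.2 hn)]

theorem smul_empKME_sub (c : H) :
    (n : ℝ) • (empKME φ n x - c) = ∑ t ∈ range n, (φ (x t) - c) := by
  rw [smul_sub, ← sum_eq_smul_empKME, Finset.sum_sub_distrib, Finset.sum_const, card_range,
    Nat.cast_smul_eq_nsmul]

theorem sum_norm_sub_sq_eq_empKME (c : H) :
    ∑ t ∈ range n, ‖φ (x t) - c‖ ^ 2
      = ∑ t ∈ range n, ‖φ (x t) - empKME φ n x‖ ^ 2 + n * ‖empKME φ n x - c‖ ^ 2 := by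
  simpa only [card_range] using
    sum_norm_sub_sq_eq (s := range n) (by rw [card_range, sum_eq_smul_empKME]) c

theorem empVar_eq_sum_norm_sub_sq :
    empVar φ n x = ((n : ℝ) - 1)⁻¹ * ∑ t ∈ range n, ‖φ (x t) - empKME φ n x‖ ^ 2 := by
  have hself := sum_norm_sub_sq_eq_empKME φ n x 0
  have hcross : ∑ t ∈ range n, inner ℝ (φ (x t)) (empKME φ n x) = n * ‖empKME φ n x‖ ^ 2 := by
    rw [← sum_inner, sum_eq_smul_empKME, real_inner_smul_left, real_inner_self_eq_norm_sq]
  have hinner (t : ℕ) : (n : ℝ)⁻¹ * ∑ s ∈ range n, kerG φ (x t) (x s)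
      = inner ℝ (φ (x t)) (empKME φ n x) := by
    simp only [kerG, empKME, real_inner_smul_right, inner_sum]
  simp only [sub_zero] at hself
  simp only [empVar, hinner, Finset.sum_sub_distrib, hcross]
  simp only [kerG, real_inner_self_eq_norm_sq, hself, add_sub_cancel_right]

theorem mean_norm_sub_sq_sub_le_empVar (hn : 2 ≤ n) (c : H) :
    (n : ℝ)⁻¹ * ∑ t ∈ range n, ‖φ (x t) - c‖ ^ 2 - ‖empKME φ n x - c‖ ^ 2 ≤ empVar φ n x := by
  have hn' : (2 : ℝ) ≤ n := by exact_mod_cast hn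
  rw [empVar_eq_sum_norm_sub_sq, sum_norm_sub_sq_eq_empKME φ n x c, mul_add,
    inv_mul_cancel_left₀ (by positivity), add_sub_cancel_right]
  gcongr <;> linarith

theorem empKME_eq_KME_of_forall_eq [CompleteSpace H] [MeasurableSpace 𝒳] {ν : Measure 𝒳}
    [IsProbabilityMeasure ν] {φ : 𝒳 → H} {n : ℕ} {x : ℕ → 𝒳} (hφ : ∀ a b, φ a = φ b)
    (hn : n ≠ 0) : empKME φ n x = KME φ ν := by
  simp only [empKME, KME, hφ _ (x 0), Finset.sum_const, card_range, integral_const, probReal_univ,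
    one_smul]
  rw [← Nat.cast_smul_eq_nsmul ℝ, inv_smul_smul₀ (Nat.cast_ne_zero.2 hn)]

end Kernel

section Deterministic

theorem sqrt_two_mul_mul_sq_mul_mul_sq {a y w : ℝ} (ha : 0 ≤ a) (hy : 0 ≤ y) (hw : 0 ≤ w) :
    √(2 * (a * y ^ 2) * (a * w ^ 2)) = a * (√2 * y * w) := by
  rw [show 2 * (a * y ^ 2) * (a * w ^ 2) = 2 * (a * y * w) ^ 2 by ring,
    Real.sqrt_mul zero_le_two, Real.sqrt_sq (by positivity)]
  ring

theorem sq_sub_three_mul_le_of_variance_bounds {G w σ m z v : ℝ} (hG : 0 < G) (hw : 0 ≤ w)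
    (hσG : σ ≤ G) (hwσ : 3 * G * w < σ) (hm0 : 0 ≤ m)
    (hm : m ≤ √2 * σ * w + √2 / 3 * G * w ^ 2)
    (hz : σ ^ 2 - 2 * G * σ * w ≤ z) (hv : z - m ^ 2 ≤ v) : (σ - 3 * G * w) ^ 2 ≤ v := by
  have hσ : 0 < σ := lt_of_le_of_lt (by positivity) hwσ
  have hw3 : w ≤ 1 / 3 := by
    rw [← mul_le_mul_iff_right₀ hG]
    linarith
  have hGw : G * w * w ≤ σ / 3 * w := by
    gcongr
    linarith
  have hm' : m ≤ √2 * (10 / 9 * σ * w) := by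
    calc m ≤ √2 * σ * w + √2 / 3 * G * w ^ 2 := hm
      _ = √2 * (σ * w + G * w * w / 3) := by ring
      _ ≤ √2 * (10 / 9 * σ * w) := by
        gcongr
        linarith
  have hm_sq : m ^ 2 ≤ G * σ * w := by
    calc m ^ 2 ≤ (√2 * (10 / 9 * σ * w)) ^ 2 := by gcongr
      _ = 200 / 81 * (σ * σ * (w * w)) := by
        rw [mul_pow, Real.sq_sqrt zero_le_two]
        ring
      _ ≤ 200 / 81 * (G * σ * (1 / 3 * w)) := by gcongr
      _ ≤ G * σ * w := by linarith [show 0 ≤ G * σ * w by positivity]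
  have hGw_sq : G * w * (3 * G * w) ≤ G * w * σ := by gcongr
  linarith

/-- The constant comes from `√2 * (3 + 1 / 3) ≤ 16 / 3`: with variance proxy
`max σ (3 * G * w)`, replacing `σ` by `√v + 3 * G * w` in the leading term of `hm` costs
`3 * √2 * G * w ^ 2`. -/
theorem le_sqrt_add_of_variance_bounds {G w σ m z v : ℝ} (hG : 0 < G) (hw : 0 ≤ w)
    (hσG : σ ≤ G) (hm0 : 0 ≤ m)
    (hm : m ≤ √2 * max σ (3 * G * w) * w + √2 / 3 * G * w ^ 2)
    (hz : σ ^ 2 - 2 * G * max σ (3 * G * w) * w ≤ z) (hv : z - m ^ 2 ≤ v) :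
    m ≤ √(2 * v * w ^ 2) + 16 / 3 * G * w ^ 2 := by
  have hconst : √2 * (G * w ^ 2) ≤ 8 / 5 * (G * w ^ 2) := by
    gcongr
    rw [Real.sqrt_le_left (by norm_num)]
    norm_num
  have hGw : 0 ≤ G * w ^ 2 := by positivity
  suffices hmain : √2 * max σ (3 * G * w) * w ≤ √(2 * v * w ^ 2) + 3 * (√2 * (G * w ^ 2)) by
    linarith
  rcases le_or_gt σ (3 * G * w) with hσ | hσ
  · rw [max_eq_right hσ]
    linarith [Real.sqrt_nonneg (2 * v * w ^ 2)]
  · rw [max_eq_left hσ.le] at hm hz ⊢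
    have hv_ge := sq_sub_three_mul_le_of_variance_bounds hG hw hσG hσ hm0 hm hz hv
    have hsqrt : √2 * (σ - 3 * G * w) * w ≤ √(2 * v * w ^ 2) := by
      refine Real.le_sqrt_of_sq_le ?_
      rw [mul_pow, mul_pow, Real.sq_sqrt zero_le_two]
      gcongr
    linarith

end Deterministic

theorem ofReal_one_sub_le_measure_of_measureReal_compl_le {Ω : Type*}
    [MeasurableSpace Ω] {P : Measure Ω} [IsProbabilityMeasure P] {A : Set Ω}
    {δ : ℝ} (hA : P.real Aᶜ ≤ δ) : ENNReal.ofReal (1 - δ) ≤ P A := by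
  refine ENNReal.ofReal_le_of_le_toReal ?_
  have hcover : (1 : ℝ) ≤ P.real A + P.real Aᶜ := by
    simpa only [Set.union_compl_self, probReal_univ] using measureReal_union_le (μ := P) A Aᶜ
  rw [← measureReal_def]
  linarith

section Sampling

variable {𝒳 Ω : Type*} [MeasurableSpace 𝒳] [MeasurableSpace Ω] {P : Measure Ω} {ν : Measure 𝒳}
  {X : ℕ → Ω → 𝒳} {n : ℕ}

theorem measureReal_mean_le_integral_sub_of_nonneg {Z : 𝒳 → ℝ} {y w : ℝ}
    (hindep : iIndepFun X P) (hX : ∀ t, HasLaw (X t) ν P) (hn : n ≠ 0) (hZm : Measurable Z)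
    (hZ : MemLp Z 2 ν) (hZ0 : ∀ x, 0 ≤ Z x) (hy : ∫ x, Z x ^ 2 ∂ν ≤ y ^ 2) (hy0 : 0 < y)
    (hw : 0 ≤ w) :
    P.real {ω | (n : ℝ)⁻¹ * ∑ t ∈ range n, Z (X t ω) ≤ ∫ x, Z x ∂ν - √2 * y * w}
      ≤ Real.exp (-(n * w ^ 2)) := by
  have hmean (t : ℕ) : ∫ ω, Z (X t ω) ∂P = ∫ x, Z x ∂ν :=
    (hX t).integral_comp hZm.aestronglyMeasurable
  have hsq (t : ℕ) : ∫ ω, Z (X t ω) ^ 2 ∂P = ∫ x, Z x ^ 2 ∂ν :=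
    (hX t).integral_comp (hZm.pow_const 2).aestronglyMeasurable
  have hMemLp (t : ℕ) : MemLp (fun ω => Z (X t ω)) 2 P :=
    ((hX t).map_eq ▸ hZ).comp_of_map (hX t).aemeasurable
  have hvar : ∑ t ∈ range n, ∫ ω, Z (X t ω) ^ 2 ∂P ≤ n * y ^ 2 := by
    simp only [hsq, Finset.sum_const, card_range, nsmul_eq_mul]
    gcongr
  have htail := measureReal_sum_le_sub_sqrt_of_nonneg (L := n * w ^ 2)
    (hindep.comp (fun _ => Z) fun _ => hZm) hMemLp (fun t _ => ae_of_all _ fun ω => hZ0 (X t ω))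
    hvar (by positivity) (by positivity)
  simp only [hmean, Finset.sum_const, card_range, nsmul_eq_mul, ← mul_sub,
    sqrt_two_mul_mul_sq_mul_mul_sq (Nat.cast_nonneg n) hy0.le hw,
    Function.comp_apply] at htail
  simpa only [inv_mul_le_iff₀ (show (0 : ℝ) < n by positivity)] using htail

theorem measureReal_mean_norm_sub_sq_le {E : Type*} [NormedAddCommGroup E]
    [MeasurableSpace E] [BorelSpace E] {φ : 𝒳 → E} {c : E} {B y w : ℝ}
    (hindep : iIndepFun X P) (hX : ∀ t, HasLaw (X t) ν P) (hn : n ≠ 0) (hφ : Measurable φ)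
    (hB : ∀ x, ‖φ x - c‖ ≤ B) (hB0 : 0 < B) (hy : ∫ x, ‖φ x - c‖ ^ 2 ∂ν ≤ y ^ 2) (hy0 : 0 < y)
    (hw : 0 ≤ w) :
    P.real {ω | (n : ℝ)⁻¹ * ∑ t ∈ range n, ‖φ (X t ω) - c‖ ^ 2
        ≤ ∫ x, ‖φ x - c‖ ^ 2 ∂ν - √2 * (B * y) * w} ≤ Real.exp (-(n * w ^ 2)) := by
  have := hindep.isProbabilityMeasure
  have := (hX 0).isProbabilityMeasure_iff.1 ‹_›
  have hmeas : Measurable fun x => ‖φ x - c‖ ^ 2 := by fun_prop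
  have hnonneg (x : 𝒳) : 0 ≤ ‖φ x - c‖ ^ 2 := sq_nonneg _
  have hle (x : 𝒳) : ‖φ x - c‖ ^ 2 ≤ B ^ 2 := pow_le_pow_left₀ (norm_nonneg _) (hB x) 2
  have hsq : MemLp (fun x => ‖φ x - c‖ ^ 2) 2 ν :=
    .of_bound hmeas.aestronglyMeasurable (B ^ 2) <| ae_of_all _ fun x => by
      rw [Real.norm_of_nonneg (hnonneg x)]
      exact hle x
  have hfourth : ∫ x, (‖φ x - c‖ ^ 2) ^ 2 ∂ν ≤ (B * y) ^ 2 := by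
    calc ∫ x, (‖φ x - c‖ ^ 2) ^ 2 ∂ν
        ≤ ∫ x, B ^ 2 * ‖φ x - c‖ ^ 2 ∂ν := by
          refine integral_mono hsq.integrable_sq ((hsq.integrable one_le_two).const_mul _)
            fun x => ?_
          rw [sq (‖φ x - c‖ ^ 2)]
          exact mul_le_mul_of_nonneg_right (hle x) (hnonneg x)
      _ ≤ (B * y) ^ 2 := by
          rw [integral_const_mul, mul_pow]
          gcongr
  exact measureReal_mean_le_integral_sub_of_nonneg (Z := fun x => ‖φ x - c‖ ^ 2) hindep hX hn
    hmeas hsq hnonneg hfourth (mul_pos hB0 hy0) hw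

variable {H : Type*} [NormedAddCommGroup H] [InnerProductSpace ℝ H] [CompleteSpace H]
  [SecondCountableTopology H] [MeasurableSpace H] [BorelSpace H]

theorem measureReal_bernstein_le_norm_empKME_sub_KME {φ : 𝒳 → H} {B y w : ℝ}
    (hindep : iIndepFun X P) (hX : ∀ t, HasLaw (X t) ν P) (hn : n ≠ 0) (hφ : Measurable φ)
    (hint : Integrable φ ν) (hB : ∀ x, ‖φ x - KME φ ν‖ ≤ B) (hB0 : 0 ≤ B)
    (hy : ∫ x, ‖φ x - KME φ ν‖ ^ 2 ∂ν ≤ y ^ 2) (hy0 : 0 < y) (hw : 0 ≤ w) :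
    P.real {ω | √2 * y * w + B / 3 * w ^ 2 ≤ ‖empKME φ n (fun t => X t ω) - KME φ ν‖}
      ≤ 2 * Real.exp (-(n * w ^ 2)) := by
  have := hindep.isProbabilityMeasure
  have := (hX 0).isProbabilityMeasure_iff.1 ‹_›
  have hcentred : Measurable fun x => φ x - KME φ ν := hφ.sub_const _
  have hmean (t : ℕ) : ∫ ω, (φ (X t ω) - KME φ ν) ∂P = 0 := by
    rw [← Function.comp_def (fun x => φ x - KME φ ν) (X t),
      (hX t).integral_comp hcentred.aestronglyMeasurable,
      integral_sub hint (integrable_const _), integral_const, probReal_univ, one_smul, KME,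
      sub_self]
  have hvar : ∑ t ∈ range n, ∫ ω, ‖φ (X t ω) - KME φ ν‖ ^ 2 ∂P ≤ n * y ^ 2 := by
    have hsq (t : ℕ) :
        ∫ ω, ‖φ (X t ω) - KME φ ν‖ ^ 2 ∂P = ∫ x, ‖φ x - KME φ ν‖ ^ 2 ∂ν :=
      (hX t).integral_comp (hcentred.norm.pow_const 2).aestronglyMeasurable
    simp only [hsq, Finset.sum_const, card_range, nsmul_eq_mul]
    gcongr
  have htail := measureReal_bernstein_le_norm_sum (L := n * w ^ 2)
    (hindep.comp (fun _ x => φ x - KME φ ν) fun _ => hcentred)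
    (fun t => hcentred.comp_aemeasurable (hX t).aemeasurable)
    (fun t _ => ae_of_all _ fun ω => hB (X t ω)) hB0 (fun t _ => hmean t) hvar
    (by positivity) (by positivity)
  have hthreshold : √(2 * (n * y ^ 2) * (n * w ^ 2)) + B / 3 * (n * w ^ 2)
      = n * (√2 * y * w + B / 3 * w ^ 2) := by
    rw [sqrt_two_mul_mul_sq_mul_mul_sq (Nat.cast_nonneg n) hy0.le hw]
    ring
  simp only [hthreshold, Function.comp_apply, ← smul_empKME_sub φ n fun t => X t _,
    norm_smul_of_nonneg (Nat.cast_nonneg n)] at htail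
  simpa only [mul_le_mul_iff_right₀ (show (0 : ℝ) < n by positivity)] using htail

theorem measureReal_empVar_bound_lt_norm_empKME_sub_KME_of_pos {φ : 𝒳 → H} {D w : ℝ}
    (hindep : iIndepFun X P) (hX : ∀ t, HasLaw (X t) ν P) (hn : 2 ≤ n) (hφ : Measurable φ)
    (hφ2 : MemLp φ 2 ν) (hD : ∀ x y, ‖φ x - φ y‖ ^ 2 ≤ 2 * D) (hD0 : 0 < D) (hw : 0 < w) :
    P.real {ω | √(2 * empVar φ n (fun t => X t ω) * w ^ 2) + 16 / 3 * √D * w ^ 2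
        < ‖empKME φ n (fun t => X t ω) - KME φ ν‖} ≤ 3 * Real.exp (-(n * w ^ 2)) := by
  have := hindep.isProbabilityMeasure
  have := (hX 0).isProbabilityMeasure_iff.1 ‹_›
  have hn0 : n ≠ 0 := by lia
  set V := ∫ x, ‖φ x - KME φ ν‖ ^ 2 ∂ν
  have hV0 : 0 ≤ V := integral_nonneg fun x => sq_nonneg _
  have hVD : 2 * V ≤ 2 * D := two_mul_integral_norm_sub_integral_sq_le hφ2 hD
  have hB (x : 𝒳) : ‖φ x - KME φ ν‖ ≤ √2 * √D := by
    rw [← Real.sqrt_mul zero_le_two]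
    exact Real.le_sqrt_of_sq_le <|
      (le_add_of_nonneg_right hV0).trans (norm_sub_integral_sq_add_integral_le hφ2 hD x)
  set y := max √V (3 * √D * w)
  have hy0 : 0 < y := lt_max_of_lt_right (by positivity)
  have hVy : V ≤ y ^ 2 := (Real.sqrt_le_left hy0.le).1 (le_max_left _ _)
  have hnorm_tail := measureReal_bernstein_le_norm_empKME_sub_KME hindep hX hn0 hφ
    (hφ2.integrable one_le_two) hB (by positivity) hVy hy0 hw.le
  have hvar_tail := measureReal_mean_norm_sub_sq_le hindep hX hn0 hφ hB (by positivity) hVy hy0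
    hw.le
  refine (measureReal_mono fun ω hω => ?_).trans ((measureReal_union_le _ _).trans
    ((add_le_add hnorm_tail hvar_tail).trans_eq (by ring)))
  contrapose! hω
  simp only [Set.mem_union, Set.mem_ofPred_eq, not_or, not_le, not_lt] at hω ⊢
  obtain ⟨hnorm, hvar⟩ := hω
  have hcross : √2 * (√2 * √D * y) * w = 2 * √D * y * w := by
    rw [← mul_assoc, ← mul_assoc, Real.mul_self_sqrt zero_le_two]
  refine le_sqrt_add_of_variance_bounds (z := (n : ℝ)⁻¹ * ∑ t ∈ range n, ‖φ (X t ω) - KME φ ν‖ ^ 2)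
    (Real.sqrt_pos.2 hD0) hw.le (Real.sqrt_le_sqrt (le_of_mul_le_mul_left hVD two_pos))
    (norm_nonneg _) (hnorm.le.trans_eq (by ring)) ?_ (mean_norm_sub_sq_sub_le_empVar φ n _ hn _)
  rw [Real.sq_sqrt hV0, ← hcross]
  exact hvar.le

theorem measureReal_empVar_bound_lt_norm_empKME_sub_KME {φ : 𝒳 → H} {D w : ℝ}
    (hindep : iIndepFun X P) (hX : ∀ t, HasLaw (X t) ν P) (hn : 2 ≤ n) (hφ : Measurable φ)
    (hφ2 : MemLp φ 2 ν) (hD : ∀ x y, ‖φ x - φ y‖ ^ 2 ≤ 2 * D) (hw : 0 < w) :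
    P.real {ω | √(2 * empVar φ n (fun t => X t ω) * w ^ 2) + 16 / 3 * √D * w ^ 2
        < ‖empKME φ n (fun t => X t ω) - KME φ ν‖} ≤ 3 * Real.exp (-(n * w ^ 2)) := by
  rcases lt_or_ge 0 D with hD0 | hD0
  · exact measureReal_empVar_bound_lt_norm_empKME_sub_KME_of_pos hindep hX hn hφ hφ2 hD hD0 hw
  have := hindep.isProbabilityMeasure
  have := (hX 0).isProbabilityMeasure_iff.1 ‹_›
  have hconst (x y : 𝒳) : φ x = φ y := by
    rw [← sub_eq_zero, ← norm_eq_zero, ← sq_eq_zero_iff]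
    exact le_antisymm ((hD x y).trans (by linarith)) (sq_nonneg _)
  have hempty : {ω | √(2 * empVar φ n (fun t => X t ω) * w ^ 2) + 16 / 3 * √D * w ^ 2
      < ‖empKME φ n (fun t => X t ω) - KME φ ν‖} = ∅ :=
    Set.eq_empty_of_forall_notMem fun ω => by
      rw [Set.mem_ofPred_eq, empKME_eq_KME_of_forall_eq (ν := ν) hconst (by lia), sub_self,
        norm_zero, not_lt]
      positivity
  rw [hempty, measureReal_empty]
  positivity

theorem varianceAware_empirical_KME_bound_general [IsProbabilityMeasure P] {φ : 𝒳 → H}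
    (hφ : Measurable φ) (hbdd : ∃ C : ℝ, ∀ x, ‖φ x‖ ≤ C) (hn : 2 ≤ n)
    (hX : ∀ t, HasLaw (X t) ν P) (hindep : iIndepFun X P) {δ : ℝ} (hδ0 : 0 < δ) (hδ1 : δ ≤ 1) :
    ENNReal.ofReal (1 - δ) ≤
      P {ω | ‖empKME φ n (fun t => X t ω) - KME φ ν‖
          ≤ √(2 * empVar φ n (fun t => X t ω) * Real.log (4 / δ) / n)
            + (16 / 3) * √(kerRange φ) * (Real.log (4 / δ) / n)} := by
  have := (hX 0).isProbabilityMeasure_iff.1 ‹_›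
  have hn0 : (0 : ℝ) < n := by positivity
  have hlog : 0 < Real.log (4 / δ) := Real.log_pos (by rw [one_lt_div hδ0]; linarith)
  have hw : 0 < √(Real.log (4 / δ) / n) := Real.sqrt_pos.2 (by positivity)
  have hw_sq : √(Real.log (4 / δ) / n) ^ 2 = Real.log (4 / δ) / n := Real.sq_sqrt (by positivity)
  have hφ2 : MemLp φ 2 ν := hbdd.elim fun C hC =>
    .of_bound hφ.aestronglyMeasurable C (ae_of_all _ hC)
  have htail := measureReal_empVar_bound_lt_norm_empKME_sub_KME hindep hX hn hφ hφ2
    (norm_sub_sq_le_two_mul_kerRange hbdd) hw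
  rw [hw_sq, mul_div_cancel₀ _ hn0.ne', Real.exp_neg, Real.exp_log (by positivity),
    inv_div] at htail
  refine ofReal_one_sub_le_measure_of_measureReal_compl_le ?_
  simp only [Set.compl_ofPred, not_le, mul_div_assoc] at htail ⊢
  linarith

end Sampling

/-- (Lemma A.3: variance-aware empirical concentration of the KME.) For i.i.d. samples
`X_1, …, X_n ∼ ν` and a bounded measurable feature map `φ` with translation-invariant
kernel, with probability at least `1 − δ'`,
`‖μ̂ − μ_ν‖ ≤ √(2 𝒱̂ log(4/δ')/n) + (16/3) √g̃ log(4/δ')/n`. -/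
theorem varianceAware_empirical_KME_bound
    {𝒳 H Ω : Type*} [MeasurableSpace 𝒳] [AddCommGroup 𝒳]
    [NormedAddCommGroup H] [InnerProductSpace ℝ H] [CompleteSpace H]
    [SecondCountableTopology H] [MeasurableSpace H] [BorelSpace H] [MeasurableSpace Ω]
    (P : Measure Ω) [IsProbabilityMeasure P]
    (φ : 𝒳 → H) (hφmeas : Measurable φ) (hφbdd : ∃ C : ℝ, ∀ x : 𝒳, ‖φ x‖ ≤ C)
    (hTI : ∃ Ψ : 𝒳 → ℝ, ∀ x y : 𝒳, kerG φ x y = Ψ (x - y))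
    (ν : Measure 𝒳) [IsProbabilityMeasure ν]
    (n : ℕ) (hn : 2 ≤ n)
    (X : ℕ → Ω → 𝒳) (hXmeas : ∀ t, Measurable (X t))
    (hXlaw : ∀ t, Measure.map (X t) P = ν)
    (hXindep : iIndepFun X P)
    (δ' : ℝ) (hδ0 : 0 < δ') (hδ1 : δ' ≤ 1) :
    ENNReal.ofReal (1 - δ') ≤
      P {ω | ‖empKME φ n (fun t => X t ω) - KME φ ν‖
          ≤ Real.sqrt (2 * empVar φ n (fun t => X t ω) * Real.log (4 / δ') / n)
            + (16 / 3) * Real.sqrt (kerRange φ) * (Real.log (4 / δ') / n)} := by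
  exact varianceAware_empirical_KME_bound_general hφmeas hφbdd hn
    (fun t => ⟨(hXmeas t).aemeasurable, hXlaw t⟩) hXindep hδ0 hδ1

end
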